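/- For p an odd prime, the number of quaternions x over Z/pZ with norm n(x) = 0 and trace t(x) ≠ 0 is p^3 - p = p(p-1)(p+1). -/

import Mathlib

/-- Parametrization of singular two by two matrices `(u, v, w, z)` of nonzero trace `s`. -/
def singParam (F : Type*) [Field F] : (Fˣ × F) × (Fˣ ⊕ Bool) → F × F × F × F
  | ((s, t), Sum.inl v) => (t, (v : F), t * ((s : F) - t) / (v : F), (s : F) - t)
  | ((s, t), Sum.inr true) => ((s : F), 0, t, 0)
  | ((s, t), Sum.inr false) => (0, 0, t, (s : F))

lemma singParam_injective (F : Type*) [Field F] : Function.Injective (singParam F) := by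
  rintro ⟨⟨s, t⟩, v | _ | _⟩ ⟨⟨s', t'⟩, v' | _ | _⟩ h <;>
    simp only [singParam, Prod.mk.injEq] at h <;> obtain ⟨h1, h2, h3, h4⟩ := h
  · have hv : v = v' := Units.ext h2
    have hs : s = s' := by
      apply Units.ext
      rw [h1] at h4
      exact sub_left_injective h4
    rw [h1, hv, hs]
  · exact absurd h2 v.ne_zero
  · exact absurd h2 v.ne_zero
  · exact absurd h2.symm v'.ne_zero
  · rw [h3, Units.ext h4]
  · exact absurd h1.symm s'.ne_zero
  · exact absurd h2.symm v'.ne_zero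
  · exact absurd h1 s.ne_zero
  · rw [h3, Units.ext h1]

lemma singParam_range (F : Type*) [Field F] :
    Set.range (singParam F) = {m | m.1 * m.2.2.2 = m.2.1 * m.2.2.1 ∧ m.1 + m.2.2.2 ≠ 0} := by
  ext ⟨u, v, w, z⟩
  simp only [Set.mem_range, Set.mem_ofPred_eq]
  constructor
  · rintro ⟨⟨⟨s, t⟩, v' | _ | _⟩, h⟩ <;>
      simp only [singParam, Prod.mk.injEq] at h <;> obtain ⟨rfl, rfl, rfl, rfl⟩ := h
    · have := v'.ne_zero
      refine ⟨by field_simp, by simp⟩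
    · simp
    · simp
  · rintro ⟨h, hs⟩
    by_cases hv : v = 0
    · subst hv
      rw [zero_mul, mul_eq_zero] at h
      rcases h with rfl | rfl
      · rw [zero_add] at hs
        exact ⟨((Units.mk0 z hs, w), Sum.inr false), rfl⟩
      · rw [add_zero] at hs
        exact ⟨((Units.mk0 u hs, w), Sum.inr true), rfl⟩
    · refine ⟨((Units.mk0 _ hs, u), Sum.inl (Units.mk0 v hv)), ?_⟩
      simp only [singParam, Units.val_mk0, Prod.mk.injEq, true_and]
      refine ⟨?_, by ring⟩
      rw [div_eq_iff hv]
      linear_combination h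

/-- The splitting of the quaternions given `a ^ 2 + b ^ 2 = -1`. -/
def quatSplit {F : Type*} [Field F] (h2 : (2 : F) ≠ 0) (a b : F) (hab : a ^ 2 + b ^ 2 = -1) :
    Quaternion F ≃ F × F × F × F where
  toFun x := (x.re + a * x.imJ - b * x.imK, -x.imI + b * x.imJ + a * x.imK,
    x.imI + b * x.imJ + a * x.imK, x.re - a * x.imJ + b * x.imK)
  invFun m := ⟨(m.1 + m.2.2.2) / 2, (m.2.2.1 - m.2.1) / 2,
    -(a * (m.1 - m.2.2.2) + b * (m.2.1 + m.2.2.1)) / 2,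
    (b * (m.1 - m.2.2.2) - a * (m.2.1 + m.2.2.1)) / 2⟩
  left_inv x := by
    ext <;> simp only <;> rw [div_eq_iff h2]
    · ring
    · ring
    · linear_combination (-2 * x.imJ) * hab
    · linear_combination (-2 * x.imK) * hab
  right_inv m := by
    obtain ⟨u, v, w, z⟩ := m
    simp only [Prod.mk.injEq]
    refine ⟨?_, ?_, ?_, ?_⟩ <;> field_simp
    · linear_combination (-(u - z)) * hab
    · linear_combination (-(v + w)) * hab
    · linear_combination (-(v + w)) * hab
    · linear_combination (u - z) * hab

theorem card_norm_zero_trace_nonzero (p : ℕ) (hp : p.Prime) (hodd : Odd p) [Fact p.Prime] :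
    {x : Quaternion (ZMod p) |
      x.re ^ 2 + x.imI ^ 2 + x.imJ ^ 2 + x.imK ^ 2 = 0 ∧ 2 * x.re ≠ 0}.ncard = p ^ 3 - p := by
  obtain ⟨a, b, hab⟩ := ZMod.sq_add_sq p (-1)
  have h2 : (2 : ZMod p) ≠ 0 := by
    apply Ring.two_ne_zero
    rw [ZMod.ringChar_zmod_n]
    rintro rfl
    exact absurd hodd (by decide)
  let e := quatSplit h2 a b hab
  have hS : {x : Quaternion (ZMod p) |
      x.re ^ 2 + x.imI ^ 2 + x.imJ ^ 2 + x.imK ^ 2 = 0 ∧ 2 * x.re ≠ 0}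
      = e.symm '' Set.range (singParam (ZMod p)) := by
    rw [singParam_range, Equiv.image_symm_eq_preimage]
    ext x
    have hx : e x = (x.re + a * x.imJ - b * x.imK, -x.imI + b * x.imJ + a * x.imK,
      x.imI + b * x.imJ + a * x.imK, x.re - a * x.imJ + b * x.imK) := rfl
    simp only [Set.mem_ofPred_eq, Set.mem_preimage, hx]
    refine and_congr ?_ (not_congr ?_)
    · rw [← sub_eq_zero (b := (_ * _ : ZMod p))]
      apply Eq.congr_left
      linear_combination (x.imJ ^ 2 + x.imK ^ 2) * hab
    · apply Eq.congr_left
      ring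
  rw [hS, Set.ncard_image_of_injective _ e.symm.injective, ← Nat.card_coe_set_eq,
    Nat.card_range_of_injective (singParam_injective _)]
  simp only [Nat.card_eq_fintype_card, Fintype.card_prod, Fintype.card_sum, ZMod.card_units,
    ZMod.card, Fintype.card_bool]
  obtain ⟨n, rfl⟩ : ∃ n, p = n + 1 := ⟨p - 1, by have := hp.pos; omega⟩
  rw [Nat.add_sub_cancel]
  symm
  apply Nat.sub_eq_of_eq_add
  ring
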